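/- Let Θ and 𝒴 be measurable spaces, μ a σ-finite measure on 𝒴, and f : 𝒴 × Θ → [0,∞) jointly measurable with ∫ f(y,θ) dμ(y) = 1 for every θ. For a probability measure G on Θ set f_G(y) = ∫ f(y,θ) dG(θ). Fix observations y₁,…,yₙ ∈ 𝒴, and suppose Ĝ₁ and Ĝ₂ both maximize the likelihood G ↦ ∏_{i=1}^n f_G(yᵢ) over all probability measures G on Θ, with the maximal likelihood value strictly positive and finite. Then f_{Ĝ₁}(yᵢ) = f_{Ĝ₂}(yᵢ) for every i = 1,…,n. -/

import Mathlib

open MeasureTheory ENNReal NNReal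

/-- The strict arithmetic-geometric mean inequality for products: if two positive families have the
same product, and averaging them pointwise does not increase it, then they coincide. -/
theorem eq_of_prod_midpoint_le {ι : Type*} [Fintype ι] {a b : ι → ℝ}
    (ha : ∀ i, 0 < a i) (hb : ∀ i, 0 < b i) (hab : ∏ i, a i = ∏ i, b i)
    (hmid : ∏ i, (2⁻¹ * a i + 2⁻¹ * b i) ≤ ∏ i, a i) : a = b := by
  by_contra hne
  obtain ⟨j, hj⟩ := Function.ne_iff.mp hne
  have hlt : ∏ i, a i * b i < ∏ i, (2⁻¹ * a i + 2⁻¹ * b i) ^ 2 :=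
    Finset.prod_lt_prod (fun i _ => mul_pos (ha i) (hb i))
      (fun i _ => by nlinarith [sq_nonneg (a i - b i)])
      ⟨j, Finset.mem_univ j, by nlinarith [sq_pos_of_ne_zero (sub_ne_zero.mpr hj)]⟩
  rw [Finset.prod_mul_distrib, ← hab, Finset.prod_pow, ← sq] at hlt
  refine hlt.not_ge (pow_le_pow_left₀ (Finset.prod_nonneg fun i _ => ?_) hmid 2)
  linarith [ha i, hb i]

/-- The factors of a finite nonzero product in `ℝ≥0∞` are finite. -/
theorem ENNReal.ne_top_of_prod_ne_top {ι : Type*} [Fintype ι] {a : ι → ℝ≥0∞}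
    (h0 : ∏ i, a i ≠ 0) (htop : ∏ i, a i ≠ ⊤) (i : ι) : a i ≠ ⊤ := by
  classical
  intro hi
  rw [← Finset.mul_prod_erase _ _ (Finset.mem_univ i)] at h0 htop
  exact htop (by rw [hi, ENNReal.top_mul (right_ne_zero_of_mul h0)])

/-- `ℝ≥0∞`-valued version of `eq_of_prod_midpoint_le`. -/
theorem ENNReal.eq_of_prod_midpoint_le {ι : Type*} [Fintype ι] {a b : ι → ℝ≥0∞}
    (h0 : ∏ i, a i ≠ 0) (htop : ∏ i, a i ≠ ⊤) (hab : ∏ i, a i = ∏ i, b i)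
    (hmid : ∏ i, (2⁻¹ * a i + 2⁻¹ * b i) ≤ ∏ i, a i) : a = b := by
  have ha := ENNReal.ne_top_of_prod_ne_top h0 htop
  have hb := ENNReal.ne_top_of_prod_ne_top (hab ▸ h0) (hab ▸ htop)
  have ha0 (i) : a i ≠ 0 := Finset.prod_ne_zero_iff.mp h0 i (Finset.mem_univ i)
  have hb0 (i) : b i ≠ 0 := Finset.prod_ne_zero_iff.mp (hab ▸ h0) i (Finset.mem_univ i)
  have htoReal (i) : (2⁻¹ * a i + 2⁻¹ * b i).toReal = 2⁻¹ * (a i).toReal + 2⁻¹ * (b i).toReal := by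
    rw [ENNReal.toReal_add (ENNReal.mul_ne_top (by simp) (ha i))
      (ENNReal.mul_ne_top (by simp) (hb i))]
    simp
  have h := _root_.eq_of_prod_midpoint_le (a := fun i => (a i).toReal) (b := fun i => (b i).toReal)
    (fun i => ENNReal.toReal_pos (ha0 i) (ha i)) (fun i => ENNReal.toReal_pos (hb0 i) (hb i))
    (by simp only [← ENNReal.toReal_prod, hab])
    (by simpa only [← htoReal, ← ENNReal.toReal_prod] using ENNReal.toReal_mono htop hmid)
  exact funext fun i => (ENNReal.toReal_eq_toReal_iff' (ha i) (hb i)).mp (congrFun h i)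

/-- The paper's Lemma 1: if `G₁` and `G₂` are two GMLEs (maximizers of the
likelihood `G ↦ ∏ i, f_G (y i)` over probability measures on `Θ`) and the
maximal likelihood value is strictly positive and finite, then the fitted
mixture densities at every observation coincide: `f_{G₁}(yᵢ) = f_{G₂}(yᵢ)`. -/
theorem gmle_mixture_density_eq_at_observations
    {Θ 𝒴 : Type*} [MeasurableSpace Θ] [MeasurableSpace 𝒴]
    (μ : Measure 𝒴) [SigmaFinite μ]
    (f : 𝒴 → Θ → ℝ≥0) (hf : Measurable (Function.uncurry f))
    (hf1 : ∀ θ, ∫⁻ y, (f y θ : ℝ≥0∞) ∂μ = 1)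
    (n : ℕ) (y : Fin n → 𝒴)
    (G₁ G₂ : Measure Θ) [IsProbabilityMeasure G₁] [IsProbabilityMeasure G₂]
    (hG₁ : ∀ G : Measure Θ, IsProbabilityMeasure G →
      ∏ i : Fin n, ∫⁻ θ, (f (y i) θ : ℝ≥0∞) ∂G ≤
        ∏ i : Fin n, ∫⁻ θ, (f (y i) θ : ℝ≥0∞) ∂G₁)
    (hG₂ : ∀ G : Measure Θ, IsProbabilityMeasure G →
      ∏ i : Fin n, ∫⁻ θ, (f (y i) θ : ℝ≥0∞) ∂G ≤
        ∏ i : Fin n, ∫⁻ θ, (f (y i) θ : ℝ≥0∞) ∂G₂)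
    (hpos : 0 < ∏ i : Fin n, ∫⁻ θ, (f (y i) θ : ℝ≥0∞) ∂G₁)
    (hfin : ∏ i : Fin n, ∫⁻ θ, (f (y i) θ : ℝ≥0∞) ∂G₁ < ⊤) :
    ∀ i : Fin n, ∫⁻ θ, (f (y i) θ : ℝ≥0∞) ∂G₁ = ∫⁻ θ, (f (y i) θ : ℝ≥0∞) ∂G₂ := by
  have hprob : IsProbabilityMeasure ((2⁻¹ : ℝ≥0∞) • G₁ + (2⁻¹ : ℝ≥0∞) • G₂) :=
    ⟨by simp [ENNReal.inv_two_add_inv_two]⟩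
  have hmid := hG₁ _ hprob
  simp only [lintegral_add_measure, lintegral_smul_measure, smul_eq_mul] at hmid
  exact congrFun (ENNReal.eq_of_prod_midpoint_le hpos.ne' hfin.ne
    (le_antisymm (hG₂ G₁ inferInstance) (hG₁ G₂ inferInstance)) hmid)
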